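/- Let ĝ(φ,θ) = Σ_{k=0}^{N} γ^k · Σ_τ P_k(φ,θ)(τ) · ∂_φ log(π φ s_k a_k) · Q̂ φ θ s_k a_k be the finite-horizon in-sim stochastic policy gradient. Then for every (φ,θ) the partial derivative of ĝ with respect to the simulator parameter θ exists and equals Σ_{k=0}^{N} γ^k · Σ_τ P_k(φ,θ)(τ) · ( ∂_φ log(π φ s_k a_k) · ∂_θ (Q̂ φ θ s_k a_k) + ∂_φ log(π φ s_k a_k) · Q̂ φ θ s_k a_k · Σ_{i=0}^{k-1} ∂_θ log(f θ s_i a_i s_{i+1}) ), i.e., it decomposes into a critic-sensitivity term and a distribution-sensitivity term. (Decomposition of ∇_θ ĝ used in Theorem 1, Eq. (18).) -/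

import Mathlib

/-!
The simulator parameter enters the weight of a trajectory only through its transition factors, so
the derivative of the weight is the weight times the sum of the logarithmic derivatives of those
factors, even where the initial weight or a policy factor vanishes. The product rule applied to
weight times critic then gives one term from the critic and one from the weight.
-/

/-- The unnormalized probability of the trajectory `τ = ((s₀, …, s_k), (a₀, …, a_k))` under initial
weights `ρ₀`, policy `p` and transition kernel `T`. The last action is weighted by `p` but followed
by no transition. -/
def trajectoryWeight {M S A : Type*} [CommMonoid M] (ρ₀ : S → M) (p : S → A → M)
    (T : S → A → S → M) {k : ℕ} (τ : (Fin (k + 1) → S) × (Fin (k + 1) → A)) : M :=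
  ρ₀ (τ.1 0) * p (τ.1 (Fin.last k)) (τ.2 (Fin.last k)) *
    ∏ i : Fin k, (T (τ.1 i.castSucc) (τ.2 i.castSucc) (τ.1 i.succ) *
      p (τ.1 i.castSucc) (τ.2 i.castSucc))

theorem trajectoryWeight_eq_mul_prod_transition {M S A : Type*} [CommMonoid M] (ρ₀ : S → M)
    (p : S → A → M) (T : S → A → S → M) {k : ℕ} (τ : (Fin (k + 1) → S) × (Fin (k + 1) → A)) :
    trajectoryWeight ρ₀ p T τ =
      (ρ₀ (τ.1 0) * ∏ i, p (τ.1 i) (τ.2 i)) *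
        ∏ i : Fin k, T (τ.1 i.castSucc) (τ.2 i.castSucc) (τ.1 i.succ) := by
  rw [trajectoryWeight, Finset.prod_mul_distrib, Fin.prod_univ_castSucc]
  ac_rfl

section Differentiation

variable {𝕜 : Type*} [NontriviallyNormedField 𝕜]

theorem hasDerivAt_mul_logDeriv {g : 𝕜 → 𝕜} {x : 𝕜} (hg : DifferentiableAt 𝕜 g x)
    (hx : g x ≠ 0) : HasDerivAt g (g x * logDeriv g x) x := by
  simpa only [logDeriv_apply, mul_div_cancel₀ _ hx] using hg.hasDerivAt

theorem hasDerivAt_prod_mul_sum_logDeriv {ι : Type*} {s : Finset ι} {g : ι → 𝕜 → 𝕜} {x : 𝕜}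
    (hg : ∀ i ∈ s, DifferentiableAt 𝕜 (g i) x) (hx : ∀ i ∈ s, g i x ≠ 0) :
    HasDerivAt (fun y => ∏ i ∈ s, g i y) ((∏ i ∈ s, g i x) * ∑ i ∈ s, logDeriv (g i) x) x := by
  rw [← logDeriv_prod hx hg]
  exact hasDerivAt_mul_logDeriv (.fun_finsetProd hg) (Finset.prod_ne_zero_iff.mpr hx)

variable {S A : Type*} (ρ₀ : S → 𝕜) (p : S → A → 𝕜) {f : 𝕜 → S → A → S → 𝕜} {θ : 𝕜}

theorem hasDerivAt_trajectoryWeight {k : ℕ} (τ : (Fin (k + 1) → S) × (Fin (k + 1) → A))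
    (hf : ∀ s a s', DifferentiableAt 𝕜 (fun θ' => f θ' s a s') θ)
    (hf0 : ∀ s a s', f θ s a s' ≠ 0) :
    HasDerivAt (fun θ' => trajectoryWeight ρ₀ p (f θ') τ)
      (trajectoryWeight ρ₀ p (f θ) τ * ∑ i : Fin k,
        logDeriv (fun θ' => f θ' (τ.1 i.castSucc) (τ.2 i.castSucc) (τ.1 i.succ)) θ) θ := by
  have transitions := hasDerivAt_prod_mul_sum_logDeriv (s := Finset.univ)
    (g := fun (i : Fin k) θ' => f θ' (τ.1 i.castSucc) (τ.2 i.castSucc) (τ.1 i.succ))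
    (fun _ _ => hf _ _ _) (fun _ _ => hf0 _ _ _)
  simpa only [trajectoryWeight_eq_mul_prod_transition, mul_assoc] using
    transitions.const_mul (ρ₀ (τ.1 0) * ∏ i, p (τ.1 i) (τ.2 i))

variable {E : Type*} [NormedAddCommGroup E] [NormedSpace 𝕜 E]

theorem hasDerivAt_trajectoryWeight_smul {k : ℕ} (τ : (Fin (k + 1) → S) × (Fin (k + 1) → A))
    {G : 𝕜 → E} {G' : E} (hf : ∀ s a s', DifferentiableAt 𝕜 (fun θ' => f θ' s a s') θ)
    (hf0 : ∀ s a s', f θ s a s' ≠ 0) (hG : HasDerivAt G G' θ) :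
    HasDerivAt (fun θ' => trajectoryWeight ρ₀ p (f θ') τ • G θ')
      (trajectoryWeight ρ₀ p (f θ) τ • (G' + (∑ i : Fin k,
        logDeriv (fun θ' => f θ' (τ.1 i.castSucc) (τ.2 i.castSucc) (τ.1 i.succ)) θ) • G θ)) θ := by
  simpa only [smul_add, mul_smul] using (hasDerivAt_trajectoryWeight ρ₀ p τ hf hf0).fun_smul hG

/-- `G θ s a` stands for score times critic, `∂_φ log (π φ s a) · Q̂ φ θ s a` at a fixed `φ`; its
values are vectors when `φ` is one. -/
theorem spg_sensitivity_wrt_simulator_params_general [Fintype S] [Fintype A] (N : ℕ) (γ : 𝕜)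
    {G : 𝕜 → S → A → E} {G' : S → A → E}
    (hf : ∀ s a s', DifferentiableAt 𝕜 (fun θ' => f θ' s a s') θ)
    (hf0 : ∀ s a s', f θ s a s' ≠ 0)
    (hG : ∀ s a, HasDerivAt (fun θ' => G θ' s a) (G' s a) θ) :
    HasDerivAt
      (fun θ' => ∑ k ∈ Finset.range (N + 1), γ ^ k •
        ∑ τ : (Fin (k + 1) → S) × (Fin (k + 1) → A),
          trajectoryWeight ρ₀ p (f θ') τ • G θ' (τ.1 (Fin.last k)) (τ.2 (Fin.last k)))
      (∑ k ∈ Finset.range (N + 1), γ ^ k •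
        ∑ τ : (Fin (k + 1) → S) × (Fin (k + 1) → A),
          trajectoryWeight ρ₀ p (f θ) τ •
            (G' (τ.1 (Fin.last k)) (τ.2 (Fin.last k)) +
              (∑ i : Fin k,
                logDeriv (fun θ' => f θ' (τ.1 i.castSucc) (τ.2 i.castSucc) (τ.1 i.succ)) θ) •
                G θ (τ.1 (Fin.last k)) (τ.2 (Fin.last k)))) θ :=
  .fun_sum fun k _ => .fun_const_smul (γ ^ k) <| .fun_sum fun τ _ =>
    hasDerivAt_trajectoryWeight_smul ρ₀ p τ hf hf0 (hG _ _)

end Differentiation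

/-- Decomposition of `∇_θ ĝ` (used in Theorem 1, Eq. (18)): the partial derivative of
the finite-horizon in-sim stochastic policy gradient w.r.t. the simulator parameter `θ`
exists and decomposes into a critic-sensitivity term and a distribution-sensitivity term. -/
theorem spg_sensitivity_wrt_simulator_params
    {S A : Type*} [Fintype S] [Fintype A] [Nonempty S] [Nonempty A]
    (N : ℕ) (γ : ℝ) (ρ0 : S → ℝ)
    (π : ℝ → S → A → ℝ) (f : ℝ → S → A → S → ℝ)
    (Qh : ℝ → ℝ → S → A → ℝ)
    (hπpos : ∀ φ s a, 0 < π φ s a)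
    (hπdiff : ∀ s a, Differentiable ℝ (fun φ => π φ s a))
    (hπdiff2 : ∀ s a, Differentiable ℝ (deriv (fun φ => π φ s a)))
    (hfpos : ∀ θ s a s', 0 < f θ s a s')
    (hfdiff : ∀ s a s', Differentiable ℝ (fun θ => f θ s a s'))
    (hQdiffφ : ∀ θ s a, Differentiable ℝ (fun φ => Qh φ θ s a))
    (hQdiffθ : ∀ φ s a, Differentiable ℝ (fun θ => Qh φ θ s a))
    (P : ∀ k : ℕ, ℝ → ℝ → ((Fin (k + 1) → S) × (Fin (k + 1) → A)) → ℝ)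
    (hP : ∀ k φ θ τ, P k φ θ τ =
      ρ0 (τ.1 0) * π φ (τ.1 (Fin.last k)) (τ.2 (Fin.last k)) *
        ∏ i : Fin k,
          (f θ (τ.1 i.castSucc) (τ.2 i.castSucc) (τ.1 i.succ) *
            π φ (τ.1 i.castSucc) (τ.2 i.castSucc)))
    (φ θ : ℝ) :
    HasDerivAt
      (fun θ' => ∑ k ∈ Finset.range (N + 1), γ ^ k *
        ∑ τ : (Fin (k + 1) → S) × (Fin (k + 1) → A),
          P k φ θ' τ *
            deriv (fun φ => Real.log (π φ (τ.1 (Fin.last k)) (τ.2 (Fin.last k)))) φ *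
            Qh φ θ' (τ.1 (Fin.last k)) (τ.2 (Fin.last k)))
      (∑ k ∈ Finset.range (N + 1), γ ^ k *
        ∑ τ : (Fin (k + 1) → S) × (Fin (k + 1) → A),
          P k φ θ τ *
            (deriv (fun φ => Real.log (π φ (τ.1 (Fin.last k)) (τ.2 (Fin.last k)))) φ *
                deriv (fun θ' => Qh φ θ' (τ.1 (Fin.last k)) (τ.2 (Fin.last k))) θ +
              deriv (fun φ => Real.log (π φ (τ.1 (Fin.last k)) (τ.2 (Fin.last k)))) φ *
                Qh φ θ (τ.1 (Fin.last k)) (τ.2 (Fin.last k)) *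
                ∑ i : Fin k,
                  deriv (fun θ' =>
                    Real.log (f θ' (τ.1 i.castSucc) (τ.2 i.castSucc) (τ.1 i.succ))) θ)) θ := by
  have deriv_log_eq_logDeriv : ∀ s a s', deriv (fun θ' => Real.log (f θ' s a s')) θ =
      logDeriv (fun θ' => f θ' s a s') θ := fun s a s' =>
    Real.deriv_log_comp_eq_logDeriv (hfdiff s a s' θ) (hfpos θ s a s').ne'
  simpa only [hP, trajectoryWeight, deriv_log_eq_logDeriv, smul_eq_mul, mul_assoc,
    mul_comm (Finset.sum _ _)] using
    spg_sensitivity_wrt_simulator_params_general ρ0 (π φ) N γ (fun s a s' => hfdiff s a s' θ)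
      (fun s a s' => (hfpos θ s a s').ne') fun s a =>
        (hQdiffθ φ s a θ).hasDerivAt.const_mul (deriv (fun φ => Real.log (π φ s a)) φ)
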